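/- Let 0 < δ < 10⁻⁵ and x > 1, D = x^{3/5 − 50δ}, and x^{2δ} ≤ N ≤ x^{1/3 + δ}. Let d = p₁⋯p_r with primes p₁ ≥ ⋯ ≥ p_r satisfying p₁⋯p_{j−1}p_j³ ≤ D for all odd j ≤ r. Then there exists a factorization d = d₁d₂d₃ into positive integers satisfying d₁ ≤ N·x^{−δ}, N²·d₂·d₃² ≤ x^{1−δ}, and N²·d₂⁵·d₃² ≤ x^{2−δ}. -/

import Mathlib

open scoped BigOperators

/-- `IsTripleSplit a j u v w` says that `a 0, …, a (j - 1)` can be distributed over three bins so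
that the bins have total weights `u`, `v` and `w`. -/
inductive IsTripleSplit (a : ℕ → ℝ) : ℕ → ℝ → ℝ → ℝ → Prop
  | zero : IsTripleSplit a 0 0 0 0
  | fst {j : ℕ} {u v w : ℝ} : IsTripleSplit a j u v w → IsTripleSplit a (j + 1) (u + a j) v w
  | snd {j : ℕ} {u v w : ℝ} : IsTripleSplit a j u v w → IsTripleSplit a (j + 1) u (v + a j) w
  | trd {j : ℕ} {u v w : ℝ} : IsTripleSplit a j u v w → IsTripleSplit a (j + 1) u v (w + a j)

/-- The exponents of an element of the support of the upper-bound linear sieve of level `D`. -/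
structure IsUpperSieveSeq (a : ℕ → ℝ) (D : ℝ) : Prop where
  nonneg : ∀ i, 0 ≤ a i
  anti : Antitone a
  sum_add_le : ∀ i, Even i → ∑ k ∈ Finset.range i, a k + 3 * a i ≤ D

/-- The constraints which the second and third exponents have to satisfy. -/
def Feasible (δ n v w : ℝ) : Prop :=
  2 * n + v + 2 * w ≤ 1 - δ ∧ 2 * n + 5 * v + 2 * w ≤ 2 - δ

/-- The first `m` exponents admit a distribution meeting all constraints. -/
def HasGoodSplit (a : ℕ → ℝ) (δ n : ℝ) (m : ℕ) : Prop :=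
  ∃ u v w, IsTripleSplit a m u v w ∧ u ≤ n - δ ∧ Feasible δ n v w

theorem IsTripleSplit.sum_eq {a : ℕ → ℝ} {j : ℕ} {u v w : ℝ} (h : IsTripleSplit a j u v w) :
    u + v + w = ∑ k ∈ Finset.range j, a k := by
  induction h with
  | zero => simp
  | fst _ ih => rw [Finset.sum_range_succ, ← ih]; ring
  | snd _ ih => rw [Finset.sum_range_succ, ← ih]; ring
  | trd _ ih => rw [Finset.sum_range_succ, ← ih]; ring

theorem IsUpperSieveSeq.sum_add_two_mul_le {a : ℕ → ℝ} {D : ℝ} (ha : IsUpperSieveSeq a D) (i : ℕ) :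
    ∑ k ∈ Finset.range i, a k + 2 * a i ≤ D := by
  rcases Nat.even_or_odd i with hi | ⟨k, rfl⟩
  · linarith [ha.sum_add_le i hi, ha.nonneg i]
  · rw [Finset.sum_range_succ]
    linarith [ha.sum_add_le (2 * k) (even_two_mul k), ha.anti (Nat.le_add_right (2 * k) 1)]

/-- Once the second bin is closed with a weight in the window, the remaining exponents can be
distributed greedily over the two other bins. -/
theorem IsTripleSplit.hasGoodSplit_of_window {a : ℕ → ℝ} {δ n : ℝ}
    (ha : IsUpperSieveSeq a (3 / 5 - 50 * δ)) (hδ : 0 < δ) {j : ℕ} {u t w : ℝ}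
    (h : IsTripleSplit a j u t w) (hu : u ≤ n - δ) (hL : 1 / 5 - 97 * δ ≤ t)
    (hU : t ≤ 4 / 15 - δ) (hf : Feasible δ n t w) {m : ℕ} (hm : j ≤ m) : HasGoodSplit a δ n m := by
  suffices H : ∃ u w, IsTripleSplit a m u t w ∧ u ≤ n - δ ∧ Feasible δ n t w by
    obtain ⟨u, w, H⟩ := H
    exact ⟨u, t, w, H⟩
  induction m, hm using Nat.le_induction with
  | base => exact ⟨u, w, h, hu, hf⟩
  | succ m _ ih =>
    obtain ⟨u, w, h, hu, hf⟩ := ih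
    by_cases h₁ : u + a m ≤ n - δ
    · exact ⟨_, _, h.fst, h₁, hf⟩
    · have h₂ := ha.sum_add_two_mul_le m
      rw [← h.sum_eq] at h₂
      refine ⟨_, _, h.trd, hu, ?_, ?_⟩ <;> linarith

/-- If the second bin is below the window, it may be filled up with consecutive exponents. -/
theorem IsTripleSplit.hasGoodSplit_of_block {a : ℕ → ℝ} {δ n : ℝ}
    (ha : IsUpperSieveSeq a (3 / 5 - 50 * δ)) (hδ : 0 < δ) {j : ℕ} {u v w : ℝ}
    (h : IsTripleSplit a j u v w) (hu : u ≤ n - δ) (hv : v < 1 / 5 - 97 * δ)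
    (H : ∀ t, 1 / 5 - 97 * δ ≤ t →
      (t ≤ v + a j ∨ (v + a j < 1 / 5 - 97 * δ ∧ t ≤ 1 / 5 - 97 * δ + a j ∧
        t ≤ 2 * (1 / 5 - 97 * δ) - v)) →
      t ≤ 4 / 15 - δ ∧ Feasible δ n t w) {m : ℕ} (hm : j ≤ m) : HasGoodSplit a δ n m := by
  have hf : Feasible δ n (1 / 5 - 97 * δ) w := by
    refine (H _ le_rfl ?_).2
    by_cases hj : 1 / 5 - 97 * δ ≤ v + a j
    · exact .inl hj
    · exact .inr ⟨by linarith, by linarith [ha.nonneg j], by linarith⟩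
  suffices H' : (∃ u v w, IsTripleSplit a m u v w ∧ u ≤ n - δ ∧ 1 / 5 - 97 * δ ≤ v ∧
        v ≤ 4 / 15 - δ ∧ Feasible δ n v w) ∨
      ∃ v', IsTripleSplit a m u v' w ∧ v' < 1 / 5 - 97 * δ ∧
        (m = j ∧ v' = v ∨ v + a j ≤ v') by
    rcases H' with ⟨u, v, w, h, hu, -, -, hf⟩ | ⟨v', h, hv', -⟩
    · exact ⟨u, v, w, h, hu, hf⟩
    · exact ⟨u, v', w, h, hu, by linarith [hf.1], by linarith [hf.2]⟩
  induction m, hm using Nat.le_induction with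
  | base => exact .inr ⟨v, h, hv, .inl ⟨rfl, rfl⟩⟩
  | succ m hm ih =>
    rcases ih with ⟨u, v, w, h, hu, hL, hU, hf⟩ | ⟨v', h, hv', hj⟩
    · by_cases h₁ : u + a m ≤ n - δ
      · exact .inl ⟨_, _, _, h.fst, h₁, hL, hU, hf⟩
      · have h₂ := ha.sum_add_two_mul_le m
        rw [← h.sum_eq] at h₂
        refine .inl ⟨_, _, _, h.trd, hu, hL, hU, ?_, ?_⟩ <;> linarith
    · have hmj := ha.anti hm
      have hm₀ := ha.nonneg m
      by_cases hlt : v' + a m < 1 / 5 - 97 * δ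
      · refine .inr ⟨_, h.snd, hlt, .inr ?_⟩
        rcases hj with ⟨rfl, rfl⟩ | hj
        · exact le_rfl
        · linarith
      · rw [not_lt] at hlt
        obtain ⟨hU, hf⟩ := H (v' + a m) hlt <| by
          rcases hj with ⟨rfl, rfl⟩ | hj
          · exact .inl le_rfl
          · exact .inr ⟨by linarith, by linarith, by linarith⟩
        exact .inl ⟨_, _, _, h.snd, hu, hlt, hU, hf⟩

/-- If the second bin does not exceed the window, one may first fill the first bin until an exponent
`β` does not fit any more, and then fill up the second bin if necessary. -/
theorem IsTripleSplit.hasGoodSplit_of_fill {a : ℕ → ℝ} {δ n : ℝ}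
    (ha : IsUpperSieveSeq a (3 / 5 - 50 * δ)) (hδ : 0 < δ) {j : ℕ} {u v w : ℝ}
    (h : IsTripleSplit a j u v w) (hu : u ≤ n - δ) (hv : v ≤ 4 / 15 - δ)
    (hf : Feasible δ n v w)
    (H : ∀ β t, β ≤ a j → β ≤ 3 / 5 - 49 * δ - n - v - w → 1 / 5 - 97 * δ ≤ t →
      (t ≤ v + β ∨ (v + β < 1 / 5 - 97 * δ ∧ t ≤ 1 / 5 - 97 * δ + β ∧
        t ≤ 2 * (1 / 5 - 97 * δ) - v)) →
      t ≤ 4 / 15 - δ ∧ Feasible δ n t w) {m : ℕ} (hm : j ≤ m) : HasGoodSplit a δ n m := by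
  rcases le_or_gt (1 / 5 - 97 * δ) v with hL | hL
  · exact h.hasGoodSplit_of_window ha hδ hu hL hv hf hm
  suffices H' : (∃ u, IsTripleSplit a m u v w ∧ u ≤ n - δ) ∨
      ∀ m', m ≤ m' → HasGoodSplit a δ n m' by
    rcases H' with ⟨u, h, hu⟩ | H'
    · exact ⟨u, v, w, h, hu, hf⟩
    · exact H' m le_rfl
  induction m, hm using Nat.le_induction with
  | base => exact .inl ⟨u, h, hu⟩
  | succ m hm ih =>
    rcases ih with ⟨u, h, hu⟩ | ih
    · by_cases h₁ : u + a m ≤ n - δ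
      · exact .inl ⟨_, h.fst, h₁⟩
      · have h₂ := ha.sum_add_two_mul_le m
        rw [← h.sum_eq] at h₂
        exact .inr fun m' hm' ↦ h.hasGoodSplit_of_block ha hδ hu hL
          (fun t ↦ H (a m) t (ha.anti hm) (by linarith)) (Nat.le_of_succ_le hm')
    · exact .inr fun m' hm' ↦ ih m' (Nat.le_of_succ_le hm')

set_option maxHeartbeats 800000 in
/-- The case where the first two exponents jump over the window and the
first bin can hold the largest exponent. -/
theorem IsUpperSieveSeq.hasGoodSplit_of_two_large_first {a : ℕ → ℝ} {δ n : ℝ}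
    (ha : IsUpperSieveSeq a (3 / 5 - 50 * δ)) (hδ : 0 < δ) (hδ' : δ < 1 / 100000)
    (hn : 2 * δ ≤ n) (hn' : n ≤ 1 / 3 + δ)
    (h₀ : a 0 < 1 / 5 - 97 * δ) (h₁ : 4 / 15 - δ < a 0 + a 1)
    (h₂ : a 0 + δ ≤ n) {m : ℕ} (hm : 5 ≤ m) : HasGoodSplit a δ n m := by
  have b₀ := ha.sum_add_le 0 (by decide)
  have b₂ := ha.sum_add_le 2 (by decide)
  have b₄ := ha.sum_add_le 4 (by decide)
  simp only [Finset.sum_range_succ, Finset.sum_range_zero] at b₀ b₂ b₄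
  have a₀₁ := ha.anti (show 0 ≤ 1 by decide)
  have a₁₂ := ha.anti (show 1 ≤ 2 by decide)
  have a₂₃ := ha.anti (show 2 ≤ 3 by decide)
  have a₃₄ := ha.anti (show 3 ≤ 4 by decide)
  have a₄ := ha.nonneg 4
  by_cases c1 : a 1 + a 2 < 1 / 5 - 97 * δ
  · by_cases c2 : 1 / 15 + 96 * δ < a 2
    · by_cases c3 : 1 / 15 + 96 * δ < a 3
      · by_cases c4 : a 2 + a 3 ≤ n - δ
        · by_cases c5 : 3 / 5 - 49 * δ - n - a 1 ≤ 4 / 15 - δ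
          · by_cases c6 : 2 * n + (3 / 5 - 49 * δ - n - a 1) + 2 * (a 1) ≤ 1 - δ
            · by_cases c7 : 2 * n + (2 * (1 / 5 - 97 * δ) - a 0) + 2 * (a 1) ≤ 1 - δ
              · by_cases c8 : 2 * n + 5 * (2 * (1 / 5 - 97 * δ) - a 0) + 2 * (a 1) ≤ 2 - δ
                · refine IsTripleSplit.zero.snd.trd.fst.fst.hasGoodSplit_of_fill ha hδ (by linarith)
                    (by linarith) ⟨by linarith, by linarith⟩ ?_ (by omega)
                  rintro β t hβ hβ' ht (h | ⟨h, h', h''⟩) <;> refine ⟨?_, ?_, ?_⟩ <;> linarith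
                · refine IsTripleSplit.zero.fst.snd.snd.fst.hasGoodSplit_of_block ha hδ (by linarith)
                    (by linarith) ?_ (by omega)
                  rintro t ht (h | ⟨h, h', h''⟩) <;> refine ⟨?_, ?_, ?_⟩ <;> linarith
              · refine IsTripleSplit.zero.fst.snd.snd.fst.hasGoodSplit_of_block ha hδ (by linarith)
                  (by linarith) ?_ (by omega)
                rintro t ht (h | ⟨h, h', h''⟩) <;> refine ⟨?_, ?_, ?_⟩ <;> linarith
            · refine IsTripleSplit.zero.fst.snd.snd.fst.hasGoodSplit_of_block ha hδ (by linarith)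
                (by linarith) ?_ (by omega)
              rintro t ht (h | ⟨h, h', h''⟩) <;> refine ⟨?_, ?_, ?_⟩ <;> linarith
          · refine IsTripleSplit.zero.fst.snd.snd.trd.hasGoodSplit_of_block ha hδ (by linarith)
              (by linarith) ?_ (by omega)
            rintro t ht (h | ⟨h, h', h''⟩) <;> refine ⟨?_, ?_, ?_⟩ <;> linarith
        · refine IsTripleSplit.zero.fst.snd.snd.trd.hasGoodSplit_of_block ha hδ (by linarith)
            (by linarith) ?_ (by omega)
          rintro t ht (h | ⟨h, h', h''⟩) <;> refine ⟨?_, ?_, ?_⟩ <;> linarith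
      · refine IsTripleSplit.zero.fst.snd.snd.hasGoodSplit_of_block ha hδ (by linarith)
          (by linarith) ?_ (by omega)
        rintro t ht (h | ⟨h, h', h''⟩) <;> refine ⟨?_, ?_, ?_⟩ <;> linarith
    · refine IsTripleSplit.zero.fst.snd.hasGoodSplit_of_block ha hδ (by linarith)
        (by linarith) ?_ (by omega)
      rintro t ht (h | ⟨h, h', h''⟩) <;> refine ⟨?_, ?_, ?_⟩ <;> linarith
  · refine IsTripleSplit.zero.fst.snd.hasGoodSplit_of_block ha hδ (by linarith)
      (by linarith) ?_ (by omega)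
    rintro t ht (h | ⟨h, h', h''⟩) <;> refine ⟨?_, ?_, ?_⟩ <;> linarith

/-- The case where the first two exponents jump over the window and the
first bin can hold the second but not the largest exponent. -/
theorem IsUpperSieveSeq.hasGoodSplit_of_two_large_second {a : ℕ → ℝ} {δ n : ℝ}
    (ha : IsUpperSieveSeq a (3 / 5 - 50 * δ)) (hδ : 0 < δ) (hδ' : δ < 1 / 100000)
    (hn : 2 * δ ≤ n)
    (h₀ : a 0 < 1 / 5 - 97 * δ) (h₁ : 4 / 15 - δ < a 0 + a 1)
    (h₂ : n < a 0 + δ) (h₃ : a 1 + δ ≤ n) {m : ℕ} (hm : 5 ≤ m) : HasGoodSplit a δ n m := by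
  have b₀ := ha.sum_add_le 0 (by decide)
  have b₂ := ha.sum_add_le 2 (by decide)
  have b₄ := ha.sum_add_le 4 (by decide)
  simp only [Finset.sum_range_succ, Finset.sum_range_zero] at b₀ b₂ b₄
  have a₀₁ := ha.anti (show 0 ≤ 1 by decide)
  have a₁₂ := ha.anti (show 1 ≤ 2 by decide)
  have a₂₃ := ha.anti (show 2 ≤ 3 by decide)
  have a₃₄ := ha.anti (show 3 ≤ 4 by decide)
  have a₄ := ha.nonneg 4
  by_cases c1 : a 2 + a 3 ≤ n - δ
  · by_cases c2 : 2 * n + (a 0 + a 4) + 2 * (a 1) ≤ 1 - δ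
    · refine IsTripleSplit.zero.snd.trd.fst.fst.hasGoodSplit_of_fill ha hδ (by linarith)
        (by linarith) ⟨by linarith, by linarith⟩ ?_ (by omega)
      rintro β t hβ hβ' ht (h | ⟨h, h', h''⟩) <;> refine ⟨?_, ?_, ?_⟩ <;> linarith
    · refine IsTripleSplit.zero.snd.trd.fst.fst.hasGoodSplit_of_fill ha hδ (by linarith)
        (by linarith) ⟨by linarith, by linarith⟩ ?_ (by omega)
      rintro β t hβ hβ' ht (h | ⟨h, h', h''⟩) <;> refine ⟨?_, ?_, ?_⟩ <;> linarith
  · by_cases c3 : 1 / 5 - 97 * δ ≤ a 1 + a 2 + a 4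
    · by_cases c4 : a 1 + a 2 + a 4 ≤ 4 / 15 - δ
      · by_cases c5 : 2 * n + (a 1 + a 2 + a 4) + 2 * (a 0) ≤ 1 - δ
        · by_cases c6 : 2 * n + 5 * (a 1 + a 2 + a 4) + 2 * (a 0) ≤ 2 - δ
          · by_cases c7 : a 1 + a 2 < 1 / 5 - 97 * δ
            · refine IsTripleSplit.zero.trd.snd.snd.fst.hasGoodSplit_of_block ha hδ (by linarith)
                (by linarith) ?_ (by omega)
              rintro t ht (h | ⟨h, h', h''⟩) <;> refine ⟨?_, ?_, ?_⟩ <;> linarith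
            · refine IsTripleSplit.zero.trd.snd.hasGoodSplit_of_block ha hδ (by linarith)
                (by linarith) ?_ (by omega)
              rintro t ht (h | ⟨h, h', h''⟩) <;> refine ⟨?_, ?_, ?_⟩ <;> linarith
          · refine IsTripleSplit.zero.trd.snd.snd.hasGoodSplit_of_fill ha hδ (by linarith)
              (by linarith) ⟨by linarith, by linarith⟩ ?_ (by omega)
            rintro β t hβ hβ' ht (h | ⟨h, h', h''⟩) <;> refine ⟨?_, ?_, ?_⟩ <;> linarith
        · refine IsTripleSplit.zero.trd.snd.snd.hasGoodSplit_of_fill ha hδ (by linarith)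
            (by linarith) ⟨by linarith, by linarith⟩ ?_ (by omega)
          rintro β t hβ hβ' ht (h | ⟨h, h', h''⟩) <;> refine ⟨?_, ?_, ?_⟩ <;> linarith
      · refine IsTripleSplit.zero.trd.snd.hasGoodSplit_of_block ha hδ (by linarith)
          (by linarith) ?_ (by omega)
        rintro t ht (h | ⟨h, h', h''⟩) <;> refine ⟨?_, ?_, ?_⟩ <;> linarith
    · refine IsTripleSplit.zero.trd.snd.snd.fst.hasGoodSplit_of_block ha hδ (by linarith)
        (by linarith) ?_ (by omega)
      rintro t ht (h | ⟨h, h', h''⟩) <;> refine ⟨?_, ?_, ?_⟩ <;> linarith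

/-- The case where the first two exponents jump over the window and the
first bin can hold the third and fourth exponents but not the second. -/
theorem IsUpperSieveSeq.hasGoodSplit_of_two_large_pair {a : ℕ → ℝ} {δ n : ℝ}
    (ha : IsUpperSieveSeq a (3 / 5 - 50 * δ)) (hδ : 0 < δ) (hδ' : δ < 1 / 100000)
    (h₀ : a 0 < 1 / 5 - 97 * δ) (h₁ : 4 / 15 - δ < a 0 + a 1)
    (h₂ : n < a 1 + δ) (h₃ : a 2 + a 3 + δ ≤ n) {m : ℕ} (hm : 5 ≤ m) : HasGoodSplit a δ n m := by
  have b₀ := ha.sum_add_le 0 (by decide)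
  have b₂ := ha.sum_add_le 2 (by decide)
  have b₄ := ha.sum_add_le 4 (by decide)
  simp only [Finset.sum_range_succ, Finset.sum_range_zero] at b₀ b₂ b₄
  have a₀₁ := ha.anti (show 0 ≤ 1 by decide)
  have a₁₂ := ha.anti (show 1 ≤ 2 by decide)
  have a₂₃ := ha.anti (show 2 ≤ 3 by decide)
  have a₃₄ := ha.anti (show 3 ≤ 4 by decide)
  have a₄ := ha.nonneg 4
  refine IsTripleSplit.zero.snd.trd.fst.fst.hasGoodSplit_of_fill ha hδ (by linarith)
    (by linarith) ⟨by linarith, by linarith⟩ ?_ (by omega)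
  rintro β t hβ hβ' ht (h | ⟨h, h', h''⟩) <;> refine ⟨?_, ?_, ?_⟩ <;> linarith

/-- The case where the first two exponents jump over the window and the
first bin can hold the third exponent, but neither the second nor the third and fourth. -/
theorem IsUpperSieveSeq.hasGoodSplit_of_two_large_third {a : ℕ → ℝ} {δ n : ℝ}
    (ha : IsUpperSieveSeq a (3 / 5 - 50 * δ)) (hδ : 0 < δ) (hδ' : δ < 1 / 100000)
    (hn : 2 * δ ≤ n)
    (h₀ : a 0 < 1 / 5 - 97 * δ) (h₁ : 4 / 15 - δ < a 0 + a 1)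
    (h₂ : n < a 1 + δ) (h₃ : n < a 2 + a 3 + δ)
    (h₄ : a 2 + δ ≤ n) {m : ℕ} (hm : 5 ≤ m) : HasGoodSplit a δ n m := by
  have b₀ := ha.sum_add_le 0 (by decide)
  have b₂ := ha.sum_add_le 2 (by decide)
  have b₄ := ha.sum_add_le 4 (by decide)
  simp only [Finset.sum_range_succ, Finset.sum_range_zero] at b₀ b₂ b₄
  have a₀₁ := ha.anti (show 0 ≤ 1 by decide)
  have a₁₂ := ha.anti (show 1 ≤ 2 by decide)
  have a₂₃ := ha.anti (show 2 ≤ 3 by decide)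
  have a₃₄ := ha.anti (show 3 ≤ 4 by decide)
  have a₄ := ha.nonneg 4
  by_cases c1 : 1 / 5 - 97 * δ ≤ a 1 + a 2
  · refine IsTripleSplit.zero.trd.snd.hasGoodSplit_of_block ha hδ (by linarith)
      (by linarith) ?_ (by omega)
    rintro t ht (h | ⟨h, h', h''⟩) <;> refine ⟨?_, ?_, ?_⟩ <;> linarith
  · refine IsTripleSplit.zero.trd.snd.snd.fst.hasGoodSplit_of_block ha hδ (by linarith)
      (by linarith) ?_ (by omega)
    rintro t ht (h | ⟨h, h', h''⟩) <;> refine ⟨?_, ?_, ?_⟩ <;> linarith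

/-- The case where the first two exponents jump over the window and the
first bin cannot hold the third exponent. -/
theorem IsUpperSieveSeq.hasGoodSplit_of_two_large_small {a : ℕ → ℝ} {δ n : ℝ}
    (ha : IsUpperSieveSeq a (3 / 5 - 50 * δ)) (hδ : 0 < δ) (hδ' : δ < 1 / 100000)
    (hn : 2 * δ ≤ n)
    (h₀ : a 0 < 1 / 5 - 97 * δ) (h₁ : 4 / 15 - δ < a 0 + a 1)
    (h₂ : n < a 2 + δ) {m : ℕ} (hm : 5 ≤ m) : HasGoodSplit a δ n m := by
  have b₀ := ha.sum_add_le 0 (by decide)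
  have b₂ := ha.sum_add_le 2 (by decide)
  have b₄ := ha.sum_add_le 4 (by decide)
  simp only [Finset.sum_range_succ, Finset.sum_range_zero] at b₀ b₂ b₄
  have a₀₁ := ha.anti (show 0 ≤ 1 by decide)
  have a₁₂ := ha.anti (show 1 ≤ 2 by decide)
  have a₂₃ := ha.anti (show 2 ≤ 3 by decide)
  have a₃₄ := ha.anti (show 3 ≤ 4 by decide)
  have a₄ := ha.nonneg 4
  by_cases c1 : a 1 + a 2 < 1 / 5 - 97 * δ
  · by_cases c2 : 4 / 15 - δ < a 0 + a 3
    · by_cases c3 : 2 * n + (a 1 + a 2 + a 4) + 2 * (a 0 + a 3) ≤ 1 - δ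
      · refine IsTripleSplit.zero.trd.snd.snd.trd.hasGoodSplit_of_block ha hδ (by linarith)
          (by linarith) ?_ (by omega)
        rintro t ht (h | ⟨h, h', h''⟩) <;> refine ⟨?_, ?_, ?_⟩ <;> linarith
      · refine IsTripleSplit.zero.trd.snd.snd.trd.hasGoodSplit_of_fill ha hδ (by linarith)
          (by linarith) ⟨by linarith, by linarith⟩ ?_ (by omega)
        rintro β t hβ hβ' ht (h | ⟨h, h', h''⟩) <;> refine ⟨?_, ?_, ?_⟩ <;> linarith
    · refine IsTripleSplit.zero.trd.snd.snd.trd.hasGoodSplit_of_block ha hδ (by linarith)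
        (by linarith) ?_ (by omega)
      rintro t ht (h | ⟨h, h', h''⟩) <;> refine ⟨?_, ?_, ?_⟩ <;> linarith
  · refine IsTripleSplit.zero.trd.snd.hasGoodSplit_of_block ha hδ (by linarith)
      (by linarith) ?_ (by omega)
    rintro t ht (h | ⟨h, h', h''⟩) <;> refine ⟨?_, ?_, ?_⟩ <;> linarith

/-- The case where the first three exponents jump over the window. -/
theorem IsUpperSieveSeq.hasGoodSplit_of_three_large {a : ℕ → ℝ} {δ n : ℝ}
    (ha : IsUpperSieveSeq a (3 / 5 - 50 * δ)) (hδ : 0 < δ) (hδ' : δ < 1 / 100000)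
    (hn : 2 * δ ≤ n) (hn' : n ≤ 1 / 3 + δ)
    (h₁ : a 0 + a 1 < 1 / 5 - 97 * δ) (h₂ : 4 / 15 - δ < a 0 + a 1 + a 2)
    {m : ℕ} (hm : 5 ≤ m) : HasGoodSplit a δ n m := by
  have b₀ := ha.sum_add_le 0 (by decide)
  have b₂ := ha.sum_add_le 2 (by decide)
  have b₄ := ha.sum_add_le 4 (by decide)
  simp only [Finset.sum_range_succ, Finset.sum_range_zero] at b₀ b₂ b₄
  have a₀₁ := ha.anti (show 0 ≤ 1 by decide)
  have a₁₂ := ha.anti (show 1 ≤ 2 by decide)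
  have a₂₃ := ha.anti (show 2 ≤ 3 by decide)
  have a₃₄ := ha.anti (show 3 ≤ 4 by decide)
  have a₄ := ha.nonneg 4
  by_cases c1 : 4 / 15 - δ ≤ a 0 + a 1 + a 4
  · by_cases c2 : a 0 ≤ n - δ
    · by_cases c3 : 2 * n + (a 2 + a 3 + a 4) + 2 * (a 1) ≤ 1 - δ
      · by_cases c4 : 2 * n + 5 * (a 2 + a 3 + a 4) + 2 * (a 1) ≤ 2 - δ
        · exact IsTripleSplit.zero.fst.trd.snd.snd.snd.hasGoodSplit_of_window ha hδ (by linarith)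
            (by linarith) (by linarith) ⟨by linarith, by linarith⟩ (by omega)
        · exact IsTripleSplit.zero.fst.fst.snd.snd.snd.hasGoodSplit_of_window ha hδ (by linarith)
            (by linarith) (by linarith) ⟨by linarith, by linarith⟩ (by omega)
      · exact IsTripleSplit.zero.fst.fst.snd.snd.snd.hasGoodSplit_of_window ha hδ (by linarith)
          (by linarith) (by linarith) ⟨by linarith, by linarith⟩ (by omega)
    · exact IsTripleSplit.zero.trd.trd.snd.snd.snd.hasGoodSplit_of_window ha hδ (by linarith)
        (by linarith) (by linarith) ⟨by linarith, by linarith⟩ (by omega)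
  · by_cases c5 : a 2 ≤ n - δ
    · by_cases c6 : 2 * n + (a 0 + a 1 + a 4) + 2 * (a 3) ≤ 1 - δ
      · by_cases c7 : 2 * n + 5 * (a 0 + a 1 + a 4) + 2 * (a 3) ≤ 2 - δ
        · by_cases c8 : 2 * n + (2 * (1 / 5 - 97 * δ) - (a 0 + a 1)) + 2 * (a 3) ≤ 1 - δ
          · refine IsTripleSplit.zero.snd.snd.fst.trd.hasGoodSplit_of_block ha hδ (by linarith)
              (by linarith) ?_ (by omega)
            rintro t ht (h | ⟨h, h', h''⟩) <;> refine ⟨?_, ?_, ?_⟩ <;> linarith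
          · refine IsTripleSplit.zero.snd.snd.fst.fst.hasGoodSplit_of_block ha hδ (by linarith)
              (by linarith) ?_ (by omega)
            rintro t ht (h | ⟨h, h', h''⟩) <;> refine ⟨?_, ?_, ?_⟩ <;> linarith
        · refine IsTripleSplit.zero.snd.snd.fst.fst.hasGoodSplit_of_block ha hδ (by linarith)
            (by linarith) ?_ (by omega)
          rintro t ht (h | ⟨h, h', h''⟩) <;> refine ⟨?_, ?_, ?_⟩ <;> linarith
      · refine IsTripleSplit.zero.snd.snd.fst.fst.hasGoodSplit_of_block ha hδ (by linarith)
          (by linarith) ?_ (by omega)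
        rintro t ht (h | ⟨h, h', h''⟩) <;> refine ⟨?_, ?_, ?_⟩ <;> linarith
    · refine IsTripleSplit.zero.snd.snd.trd.trd.hasGoodSplit_of_block ha hδ (by linarith)
        (by linarith) ?_ (by omega)
      rintro t ht (h | ⟨h, h', h''⟩) <;> refine ⟨?_, ?_, ?_⟩ <;> linarith

/-- Every exponent sequence of the upper-bound linear sieve has an admissible distribution. -/
theorem IsUpperSieveSeq.hasGoodSplit {a : ℕ → ℝ} {δ n : ℝ}
    (ha : IsUpperSieveSeq a (3 / 5 - 50 * δ)) (hδ : 0 < δ) (hδ' : δ < 1 / 100000)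
    (hn : 2 * δ ≤ n) (hn' : n ≤ 1 / 3 + δ)
    {m : ℕ} (hm : 5 ≤ m) : HasGoodSplit a δ n m := by
  have b₀ := ha.sum_add_le 0 (by decide)
  have b₂ := ha.sum_add_le 2 (by decide)
  have b₄ := ha.sum_add_le 4 (by decide)
  simp only [Finset.sum_range_succ, Finset.sum_range_zero] at b₀ b₂ b₄
  have a₀₁ := ha.anti (show 0 ≤ 1 by decide)
  have a₁₂ := ha.anti (show 1 ≤ 2 by decide)
  have a₂₃ := ha.anti (show 2 ≤ 3 by decide)
  have a₃₄ := ha.anti (show 3 ≤ 4 by decide)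
  have a₄ := ha.nonneg 4
  by_cases c1 : a 0 < 1 / 5 - 97 * δ
  · by_cases c2 : a 0 + a 1 ≤ 4 / 15 - δ
    · by_cases c3 : a 0 + a 1 < 1 / 5 - 97 * δ
      · by_cases c4 : a 0 + a 1 + a 2 ≤ 4 / 15 - δ
        · by_cases c5 : a 0 + a 1 + a 2 < 1 / 5 - 97 * δ
          · refine IsTripleSplit.zero.snd.snd.snd.hasGoodSplit_of_block ha hδ (by linarith)
              (by linarith) ?_ (by omega)
            rintro t ht (h | ⟨h, h', h''⟩) <;> refine ⟨?_, ?_, ?_⟩ <;> linarith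
          · exact IsTripleSplit.zero.snd.snd.snd.hasGoodSplit_of_window ha hδ (by linarith)
              (by linarith) (by linarith) ⟨by linarith, by linarith⟩ (by omega)
        · exact ha.hasGoodSplit_of_three_large hδ hδ' hn hn' (by linarith) (by linarith) hm
      · exact IsTripleSplit.zero.snd.snd.hasGoodSplit_of_window ha hδ (by linarith)
          (by linarith) (by linarith) ⟨by linarith, by linarith⟩ (by omega)
    · by_cases c6 : n < a 0 + δ
      · by_cases c7 : n < a 1 + δ
        · by_cases c8 : n < a 2 + a 3 + δ
          · by_cases c9 : n < a 2 + δ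
            · exact ha.hasGoodSplit_of_two_large_small hδ hδ' hn (by linarith) (by linarith)
                (by linarith) hm
            · exact ha.hasGoodSplit_of_two_large_third hδ hδ' hn (by linarith) (by linarith)
                (by linarith) (by linarith) (by linarith) hm
          · exact ha.hasGoodSplit_of_two_large_pair hδ hδ' (by linarith) (by linarith)
              (by linarith) (by linarith) hm
        · exact ha.hasGoodSplit_of_two_large_second hδ hδ' hn (by linarith) (by linarith)
            (by linarith) (by linarith) hm
      · exact ha.hasGoodSplit_of_two_large_first hδ hδ' hn hn' (by linarith) (by linarith)
          (by linarith) hm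
  · exact IsTripleSplit.zero.snd.hasGoodSplit_of_window ha hδ (by linarith)
      (by linarith) (by linarith) ⟨by linarith, by linarith⟩ (by omega)

theorem IsTripleSplit.exists_factorization {a : ℕ → ℝ} {x : ℝ} {q : ℕ → ℕ} (hx : 0 < x)
    (hq : ∀ i, (q i : ℝ) = x ^ a i) {j : ℕ} {u v w : ℝ} (h : IsTripleSplit a j u v w) :
    ∃ d₁ d₂ d₃ : ℕ, d₁ * d₂ * d₃ = ∏ i ∈ Finset.range j, q i ∧
      (d₁ : ℝ) = x ^ u ∧ (d₂ : ℝ) = x ^ v ∧ (d₃ : ℝ) = x ^ w := by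
  induction h with
  | zero => exact ⟨1, 1, 1, by simp, by simp, by simp, by simp⟩
  | @fst j u v w _ ih =>
    obtain ⟨d₁, d₂, d₃, hd, h₁, h₂, h₃⟩ := ih
    refine ⟨d₁ * q j, d₂, d₃, ?_, ?_, h₂, h₃⟩
    · rw [Finset.prod_range_succ, ← hd]; ring
    · rw [Nat.cast_mul, h₁, hq, Real.rpow_add hx]
  | @snd j u v w _ ih =>
    obtain ⟨d₁, d₂, d₃, hd, h₁, h₂, h₃⟩ := ih
    refine ⟨d₁, d₂ * q j, d₃, ?_, h₁, ?_, h₃⟩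
    · rw [Finset.prod_range_succ, ← hd]; ring
    · rw [Nat.cast_mul, h₂, hq, Real.rpow_add hx]
  | @trd j u v w _ ih =>
    obtain ⟨d₁, d₂, d₃, hd, h₁, h₂, h₃⟩ := ih
    refine ⟨d₁, d₂, d₃ * q j, ?_, h₁, h₂, ?_⟩
    · rw [Finset.prod_range_succ, ← hd]; ring
    · rw [Nat.cast_mul, h₃, hq, Real.rpow_add hx]

theorem Fin.prod_filter_lt_eq_prod_range {r : ℕ} (q : ℕ → ℕ) (j : Fin r) :
    ∏ i ∈ Finset.univ.filter (· < j), q i = ∏ i ∈ Finset.range j, q i := by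
  rw [Finset.prod_filter]
  simp only [Fin.lt_def]
  rw [← Finset.prod_range fun i ↦ if i < (j : ℕ) then q i else 1, ← Finset.prod_filter]
  congr 1
  ext i
  simp only [Finset.mem_filter, Finset.mem_range]
  have := j.isLt
  omega

/-- Factorization in the upper-bound linear sieve support: with `0 < δ < 10⁻⁵`,
`D = x^{3/5−50δ}`, `x^{2δ} ≤ N ≤ x^{1/3+δ}`, and `d = p₁⋯p_r` with primes
`p₁ ≥ ⋯ ≥ p_r` satisfying `p₁⋯p_{j−1}p_j³ ≤ D` for all odd `j ≤ r`, there is a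
factorization `d = d₁d₂d₃` with `d₁ ≤ N x^{−δ}`, `N²d₂d₃² ≤ x^{1−δ}`,
`N²d₂⁵d₃² ≤ x^{2−δ}`. -/
theorem fact_upper_linear_sieve (δ x N : ℝ) (hδ : 0 < δ) (hδ' : δ < 1 / 100000)
    (hx : 1 < x) (hN1 : x ^ (2 * δ) ≤ N) (hN2 : N ≤ x ^ ((1 : ℝ) / 3 + δ))
    (r : ℕ) (p : Fin r → ℕ) (hp : ∀ i, (p i).Prime)
    (hmono : ∀ i j : Fin r, i ≤ j → p j ≤ p i)
    (hplus : ∀ j : Fin r, Odd ((j : ℕ) + 1) →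
      ((∏ i ∈ Finset.univ.filter (· < j), p i : ℕ) : ℝ) * (p j : ℝ) ^ 3
        ≤ x ^ ((3 : ℝ) / 5 - 50 * δ)) :
    ∃ d₁ d₂ d₃ : ℕ, 0 < d₁ ∧ 0 < d₂ ∧ 0 < d₃ ∧ d₁ * d₂ * d₃ = ∏ i, p i ∧
      (d₁ : ℝ) ≤ N * x ^ (-δ) ∧
      N ^ 2 * (d₂ : ℝ) * (d₃ : ℝ) ^ 2 ≤ x ^ (1 - δ) ∧
      N ^ 2 * (d₂ : ℝ) ^ 5 * (d₃ : ℝ) ^ 2 ≤ x ^ (2 - δ) := by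
  have hx₀ : 0 < x := by linarith
  let q : ℕ → ℕ := fun i ↦ if h : i < r then p ⟨i, h⟩ else 1
  let a : ℕ → ℝ := fun i ↦ Real.logb x (q i)
  have hqp (i : Fin r) : q i = p i := by simp [q]
  have hq_one (i : ℕ) (hi : r ≤ i) : q i = 1 := by simp [q, hi]
  have hq_pos (i : ℕ) : 1 ≤ q i := by
    by_cases hi : i < r
    · exact (hqp ⟨i, hi⟩).symm ▸ (hp ⟨i, hi⟩).one_le
    · exact (hq_one i (not_lt.1 hi)).ge
  have hq_pos' (i : ℕ) : (0 : ℝ) < q i := by exact_mod_cast hq_pos i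
  have hq (i : ℕ) : (q i : ℝ) = x ^ a i := (Real.rpow_logb hx₀ hx.ne' (hq_pos' i)).symm
  have ha_nonneg (i : ℕ) : 0 ≤ a i := Real.logb_nonneg hx (by exact_mod_cast hq_pos i)
  have ha_anti : Antitone a := by
    intro i j hij
    refine Real.logb_le_logb_of_le hx (hq_pos' j) (Nat.cast_le.2 ?_)
    by_cases hj : j < r
    · have := hmono ⟨i, hij.trans_lt hj⟩ ⟨j, hj⟩ hij
      rwa [← hqp, ← hqp] at this
    · exact (hq_one j (not_lt.1 hj)).trans_le (hq_pos i)
  have ha : IsUpperSieveSeq a (3 / 5 - 50 * δ) := by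
    refine ⟨ha_nonneg, ha_anti, fun i hi ↦ ?_⟩
    have small (i : ℕ) (hi : Even i) (hir : i < r) :
        ∑ k ∈ Finset.range i, a k + 3 * a i ≤ 3 / 5 - 50 * δ := by
      have h := hplus ⟨i, hir⟩ hi.add_one
      have h' := Finset.prod_pos fun k (_ : k ∈ Finset.range i) ↦ hq_pos' k
      have h'' := pow_pos (hq_pos' i) 3
      rw [← Finset.prod_congr rfl fun i _ ↦ hqp i, Fin.prod_filter_lt_eq_prod_range, ← hqp,
        Nat.cast_prod, ← Real.logb_le_iff_le_rpow hx (mul_pos h' h''),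
        Real.logb_mul h'.ne' h''.ne', Real.logb_prod _ _ fun k _ ↦ (hq_pos' k).ne',
        Real.logb_pow] at h
      exact_mod_cast h
    obtain ⟨k, rfl⟩ := even_iff_exists_two_mul.1 hi
    by_cases hir : 2 * k < r
    · exact small _ hi hir
    have ha_zero : a (2 * k) = 0 := by simp [a, hq_one _ (not_lt.1 hir)]
    clear hi
    induction k with
    | zero =>
      rw [ha_zero, mul_zero, Finset.range_zero, Finset.sum_empty]
      linarith
    | succ k ih =>
      have h : ∑ i ∈ Finset.range (2 * k), a i + 3 * a (2 * k) ≤ 3 / 5 - 50 * δ := by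
        by_cases hk : 2 * k < r
        · exact small _ (even_two_mul k) hk
        · exact ih hk (by simp [a, hq_one _ (not_lt.1 hk)])
      rw [ha_zero, show 2 * (k + 1) = 2 * k + 1 + 1 from rfl, Finset.sum_range_succ,
        Finset.sum_range_succ]
      linarith [ha_anti (Nat.le_add_right (2 * k) 1), ha_nonneg (2 * k)]
  have hN₀ : 0 < N := (Real.rpow_pos_of_pos hx₀ _).trans_le hN1
  have hN : N = x ^ Real.logb x N := (Real.rpow_logb hx₀ hx.ne' hN₀).symm
  obtain ⟨u, v, w, h, hu, hv, hw⟩ := ha.hasGoodSplit (n := Real.logb x N) hδ hδ'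
    ((Real.le_logb_iff_rpow_le hx hN₀).2 hN1) ((Real.logb_le_iff_le_rpow hx hN₀).2 hN2)
    (Nat.le_add_left 5 r)
  obtain ⟨d₁, d₂, d₃, hd, h₁, h₂, h₃⟩ := h.exists_factorization hx₀ hq
  have pos {d : ℕ} {t : ℝ} (ht : (d : ℝ) = x ^ t) : 0 < d :=
    Nat.cast_pos.1 (ht ▸ Real.rpow_pos_of_pos hx₀ t)
  have rpow_pow (t : ℝ) (k : ℕ) : (x ^ t) ^ k = x ^ (k * t) := by
    rw [mul_comm, Real.rpow_mul_natCast hx₀.le]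
  refine ⟨d₁, d₂, d₃, pos h₁, pos h₂, pos h₃, ?_, ?_, ?_, ?_⟩
  · rw [hd, Finset.prod_range_add, Finset.prod_eq_one fun i _ ↦ hq_one (r + i) (by omega), mul_one,
      Finset.prod_range]
    exact Finset.prod_congr rfl fun i _ ↦ hqp i
  · rw [h₁, hN, ← Real.rpow_add hx₀]
    exact Real.rpow_le_rpow_of_exponent_le hx.le (by linarith)
  · rw [h₂, h₃, hN, rpow_pow, rpow_pow, ← Real.rpow_add hx₀, ← Real.rpow_add hx₀]
    exact Real.rpow_le_rpow_of_exponent_le hx.le (by push_cast; linarith)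
  · rw [h₂, h₃, hN, rpow_pow, rpow_pow, rpow_pow, ← Real.rpow_add hx₀, ← Real.rpow_add hx₀]
    exact Real.rpow_le_rpow_of_exponent_le hx.le (by push_cast; linarith)
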